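/- Let Φ: ℝ → ℝ be smooth with support contained in [−1,1], and set φ := −Φ''. Let r ∈ (0,1), λ ≥ r^{−1} with rλ ∈ ℕ, N ≥ 1 an integer, and k a unit vector with Nk ∈ ℤ³, and let Φ_(k) and φ_(k) be the intermittent shear profiles on ℝ³ built from Φ and φ respectively with these parameters. Let (k, k₁, k₂) be an orthonormal basis of ℝ³ with k₁ × k₂ = k. Then the vector field V(x) := (N² λ²)^{−1} Φ_(k)(x) k₁ satisfies curl curl V (x) = φ_(k)(x) k₁ for all x ∈ ℝ³. -/

import Mathlib

/-!
STATEMENT 11: The corrector identity: with Φ smooth supported in [−1,1], φ := −Φ'', and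
(k, k₁, k₂) an orthonormal basis with k₁ × k₂ = k, the vector field
V(x) = (N²λ²)^{−1} Φ_(k)(x) k₁ satisfies curl curl V = φ_(k) k₁.
-/

noncomputable section

open MeasureTheory Real
open scoped ENNReal

/-- Partial derivative in the i-th coordinate direction. -/
def pd (i : Fin 3) (f : (Fin 3 → ℝ) → ℝ) (x : Fin 3 → ℝ) : ℝ := fderiv ℝ f x (Pi.single i 1)

/-- The curl of a vector field on ℝ³. -/
def curl (F : (Fin 3 → ℝ) → (Fin 3 → ℝ)) (x : Fin 3 → ℝ) : Fin 3 → ℝ :=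
  ![pd 1 (fun y => F y 2) x - pd 2 (fun y => F y 1) x,
    pd 2 (fun y => F y 0) x - pd 0 (fun y => F y 2) x,
    pd 0 (fun y => F y 1) x - pd 1 (fun y => F y 0) x]

/-- The cross product on ℝ³. -/
def cross (a b : Fin 3 → ℝ) : Fin 3 → ℝ :=
  ![a 1 * b 2 - a 2 * b 1, a 2 * b 0 - a 0 * b 2, a 0 * b 1 - a 1 * b 0]

/-- The 2π-periodization of the rescaled profile r^{−1/2} ψ(·/r). -/
def periodize (r : ℝ) (ψ : ℝ → ℝ) (y : ℝ) : ℝ :=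
  ∑' n : ℤ, (Real.sqrt r)⁻¹ * ψ ((y + 2 * π * (n : ℝ)) / r)

/-- The intermittent shear profile ψ_(k)(x) = ψ_r(λ r N k·x). -/
def shear (ψ : ℝ → ℝ) (r lam : ℝ) (N : ℕ) (k : Fin 3 → ℝ) (x : Fin 3 → ℝ) : ℝ :=
  periodize r ψ (lam * r * (N : ℝ) * ∑ i, k i * x i)

/-- Far terms of the periodization vanish near a point. -/
theorem far_zero (r : ℝ) (hr : 0 < r) (hr1 : r < 1) (ψ : ℝ → ℝ)
    (hs : Function.support ψ ⊆ Set.Icc (-1 : ℝ) 1) (y z : ℝ) (hz : |z - y| < 1)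
    (n : ℤ) (hn : n ∉ Finset.Icc (-(⌈|y|⌉ + 3)) (⌈|y|⌉ + 3)) :
    ψ ((z + 2 * π * (n : ℝ)) / r) = 0 := by
  by_contra h
  have h1 := hs h
  obtain ⟨h1, h2⟩ := h1
  rw [le_div_iff₀ hr] at h1
  rw [div_le_iff₀ hr] at h2
  apply hn
  have hc := Int.le_ceil |y|
  have hy := abs_le.1 hc
  have hz' := abs_lt.1 hz
  have hp := Real.pi_gt_three
  have h0 : (0 : ℝ) ≤ ⌈|y|⌉ := le_trans (abs_nonneg _) hc
  rw [Finset.mem_Icc]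
  constructor
  · by_contra hlt
    have : (n : ℝ) < -(⌈|y|⌉ + 3) := by exact_mod_cast not_le.1 hlt
    nlinarith
  · by_contra hlt
    have : (⌈|y|⌉ + 3 : ℝ) < n := by exact_mod_cast not_le.1 hlt
    nlinarith

theorem periodize_hasDerivAt (r : ℝ) (hr : 0 < r) (hr1 : r < 1) (ψ : ℝ → ℝ)
    (hd : Differentiable ℝ ψ)
    (hs : Function.support ψ ⊆ Set.Icc (-1 : ℝ) 1)
    (hs' : Function.support (deriv ψ) ⊆ Set.Icc (-1 : ℝ) 1) (y : ℝ) :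
    HasDerivAt (periodize r ψ) (r⁻¹ * periodize r (deriv ψ) y) y := by
  set S := Finset.Icc (-(⌈|y|⌉ + 3)) (⌈|y|⌉ + 3) with hS
  have e1 : periodize r ψ =ᶠ[nhds y]
      fun z => ∑ n ∈ S, (Real.sqrt r)⁻¹ * ψ ((z + 2 * π * (n : ℝ)) / r) := by
    filter_upwards [Metric.ball_mem_nhds y one_pos] with z hz
    rw [Metric.mem_ball, Real.dist_eq] at hz
    exact tsum_eq_sum fun n hn => by rw [far_zero r hr hr1 ψ hs y z hz n hn, mul_zero]
  have e2 : periodize r (deriv ψ) y =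
      ∑ n ∈ S, (Real.sqrt r)⁻¹ * deriv ψ ((y + 2 * π * (n : ℝ)) / r) :=
    tsum_eq_sum fun n hn => by
      rw [far_zero r hr hr1 _ hs' y y (by simp) n hn, mul_zero]
  refine HasDerivAt.congr_of_eventuallyEq ?_ e1
  rw [e2, Finset.mul_sum]
  refine HasDerivAt.fun_sum fun n _ => ?_
  have h1 : HasDerivAt (fun z : ℝ => (z + 2 * π * (n : ℝ)) / r) (1 / r) y :=
    ((hasDerivAt_id y).add_const _).div_const r
  have h2 := ((hd ((y + 2 * π * (n : ℝ)) / r)).hasDerivAt.comp y h1).const_mul (Real.sqrt r)⁻¹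
  refine h2.congr_deriv ?_
  ring

theorem pd_shear (r lam : ℝ) (hr : 0 < r) (hr1 : r < 1) (ψ : ℝ → ℝ)
    (hd : Differentiable ℝ ψ)
    (hs : Function.support ψ ⊆ Set.Icc (-1 : ℝ) 1)
    (hs' : Function.support (deriv ψ) ⊆ Set.Icc (-1 : ℝ) 1) (N : ℕ) (k : Fin 3 → ℝ)
    (a : ℝ) (i : Fin 3) (x : Fin 3 → ℝ) :
    pd i (fun y => a * shear ψ r lam N k y) x
      = a * (lam * N * k i) * shear (deriv ψ) r lam N k x := by
  have hL : HasFDerivAt (fun y : Fin 3 → ℝ => lam * r * (N : ℝ) * ∑ j, k j * y j)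
      ((lam * r * (N : ℝ)) • ∑ j, k j • (ContinuousLinearMap.proj j : (Fin 3 → ℝ) →L[ℝ] ℝ)) x := by
    refine HasFDerivAt.const_mul ?_ _
    refine HasFDerivAt.fun_sum fun j _ => ?_
    exact (ContinuousLinearMap.proj j : (Fin 3 → ℝ) →L[ℝ] ℝ).hasFDerivAt.const_mul (k j)
  have h := ((periodize_hasDerivAt r hr hr1 ψ hd hs hs'
    (lam * r * (N : ℝ) * ∑ j, k j * x j)).comp_hasFDerivAt x hL).const_mul a
  have h' : fderiv ℝ (fun y => a * shear ψ r lam N k y) x = _ := h.fderiv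
  unfold pd
  rw [h']
  simp only [ContinuousLinearMap.smul_apply, ContinuousLinearMap.sum_apply,
    ContinuousLinearMap.proj_apply, smul_eq_mul, Pi.single_apply, mul_ite, mul_one, mul_zero,
    Finset.sum_ite_eq', Finset.sum_ite_eq, Finset.mem_univ, if_true, shear]
  field_simp

theorem support_deriv_sub (ψ : ℝ → ℝ) (hs : Function.support ψ ⊆ Set.Icc (-1 : ℝ) 1) :
    Function.support (deriv ψ) ⊆ Set.Icc (-1 : ℝ) 1 :=
  support_deriv_subset.trans (closure_minimal hs isClosed_Icc)

theorem curl_shear (r lam : ℝ) (hr : 0 < r) (hr1 : r < 1) (ψ : ℝ → ℝ)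
    (hd : Differentiable ℝ ψ)
    (hs : Function.support ψ ⊆ Set.Icc (-1 : ℝ) 1) (N : ℕ) (k a : Fin 3 → ℝ) :
    curl (fun y j => a j * shear ψ r lam N k y)
      = fun y j => (lam * N * cross k a j) * shear (deriv ψ) r lam N k y := by
  funext x j
  have hs' := support_deriv_sub ψ hs
  fin_cases j <;>
    simp [curl, cross, pd_shear r lam hr hr1 ψ hd hs hs'] <;> ring

theorem corrector_curl_curl_identity
    (Φ : ℝ → ℝ) (hΦ : ContDiff ℝ (⊤ : ℕ∞) Φ)
    (hΦsupp : Function.support Φ ⊆ Set.Icc (-1 : ℝ) 1)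
    (r lam : ℝ) (hr : 0 < r) (hr1 : r < 1) (hlam : r⁻¹ ≤ lam)
    (hrlam : ∃ m : ℕ, r * lam = (m : ℝ))
    (N : ℕ) (hN : 1 ≤ N)
    (k k₁ k₂ : Fin 3 → ℝ)
    (hk : ∑ i, k i ^ 2 = 1) (hk₁ : ∑ i, k₁ i ^ 2 = 1) (hk₂ : ∑ i, k₂ i ^ 2 = 1)
    (hkk₁ : ∑ i, k i * k₁ i = 0) (hkk₂ : ∑ i, k i * k₂ i = 0)
    (hk₁k₂ : ∑ i, k₁ i * k₂ i = 0)
    (hcross : cross k₁ k₂ = k)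
    (hkZ : ∀ i, ∃ z : ℤ, (N : ℝ) * k i = (z : ℝ)) :
    ∀ x : Fin 3 → ℝ, ∀ i : Fin 3,
      curl (curl (fun y j => ((N : ℝ) ^ 2 * lam ^ 2)⁻¹ * shear Φ r lam N k y * k₁ j)) x i
        = shear (fun s => -(deriv (deriv Φ) s)) r lam N k x * k₁ i := by
  intro x i
  have hlam0 : lam ≠ 0 := (lt_of_lt_of_le (inv_pos.2 hr) hlam).ne'
  have hN0 : (N : ℝ) ≠ 0 := by
    have : N ≠ 0 := by omega
    exact_mod_cast this
  have hd1 : Differentiable ℝ Φ := hΦ.differentiable (by simp)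
  have hd2 : Differentiable ℝ (deriv Φ) := by
    have h2 : ContDiff ℝ 2 Φ := contDiff_infty.1 hΦ 2
    exact ((contDiff_succ_iff_deriv (n := 1)).1 h2).2.2.differentiable (by simp)
  have e0 : (fun (y : Fin 3 → ℝ) (j : Fin 3) =>
      ((N : ℝ) ^ 2 * lam ^ 2)⁻¹ * shear Φ r lam N k y * k₁ j)
      = fun y j => (((N : ℝ) ^ 2 * lam ^ 2)⁻¹ * k₁ j) * shear Φ r lam N k y := by
    funext y j; ring
  have e1 := curl_shear r lam hr hr1 Φ hd1 hΦsupp N k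
    (fun j => ((N : ℝ) ^ 2 * lam ^ 2)⁻¹ * k₁ j)
  have e2 := curl_shear r lam hr hr1 (deriv Φ) hd2 (support_deriv_sub Φ hΦsupp) N k
    (fun j => lam * N * cross k (fun j => ((N : ℝ) ^ 2 * lam ^ 2)⁻¹ * k₁ j) j)
  have e3 : shear (fun s => -(deriv (deriv Φ) s)) r lam N k x
      = - shear (deriv (deriv Φ)) r lam N k x := by
    simp only [shear, periodize, mul_neg, tsum_neg]
  rw [e0, e1, e2, e3]
  simp only [Fin.sum_univ_three] at hk hkk₁
  have key : lam * N * cross k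
      (fun j => lam * N * cross k (fun j => ((N : ℝ) ^ 2 * lam ^ 2)⁻¹ * k₁ j) j) i = - k₁ i := by
    fin_cases i <;> simp [cross] <;> field_simp
    · linear_combination (k 0) * hkk₁ - k₁ 0 * hk
    · linear_combination (k 1) * hkk₁ - k₁ 1 * hk
    · linear_combination (k 2) * hkk₁ - k₁ 2 * hk
  simp only [key]
  ring

end
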